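/- Let S be an n × n integer symmetric matrix with all diagonal entries 0 and all off-diagonal entries equal to 1 or -1 (a Seidel matrix). Then det S ≡ 1 - n (mod 4). -/

import Mathlib

open Matrix

/-!
The matrix `1 - J`, with `J` the all-ones matrix, is a Seidel matrix of determinant exactly `1 - n`,
and every Seidel matrix has the form `(1 - J) + 2E` with `E` symmetric of zero diagonal. To first
order, `det (A + 2E) ≡ det A + 2 tr (adj A * E)` modulo `4`. When `A` and `E` are symmetric, the
off-diagonal contributions to `tr (adj A * E)` come in equal pairs, so this trace is even as soon as
the diagonal of `E` is, and the determinant does not change modulo `4`.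
-/

section

variable {ι R : Type*} [CommRing R]

lemma exists_isSymm_eq_smul {d r : R} {D : Matrix ι ι R} (hD : D.IsSymm)
    (hoff : ∀ i j, i ≠ j → r ∣ D i j) (hdiag : ∀ i, d * r ∣ D i i) :
    ∃ E : Matrix ι ι R, E.IsSymm ∧ (∀ i, d ∣ E i i) ∧ D = r • E := by
  classical
  -- Quotients are chosen per value, not per position, so that `E` inherits the symmetry of `D`.
  choose! quot hquot using fun (x : R) (hx : r ∣ x) => hx
  choose diagQuot hdiagQuot using hdiag
  refine ⟨of fun i j => if i = j then d * diagQuot i else quot (D i j), ?_, ?_, ?_⟩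
  · refine IsSymm.ext fun i j => ?_
    by_cases hij : i = j
    · simp [hij]
    · simp [hij, Ne.symm hij, hD.apply i j]
  · simp
  · ext i j
    by_cases hij : i = j
    · subst hij
      simp [hdiagQuot i, mul_left_comm, mul_assoc]
    · simpa [hij] using hquot _ (hoff i j hij)

lemma multilinearMap_piecewise_smul {M : ι → Type*} {N : Type*} [∀ i, AddCommMonoid (M i)]
    [AddCommMonoid N] [∀ i, Module R (M i)] [Module R N] [DecidableEq ι]
    (f : MultilinearMap R M N) (r : R) (x h : ∀ i, M i) (s : Finset ι) :
    f (s.piecewise (r • h) x) = r ^ s.card • f (s.piecewise h x) := by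
  have hpiecewise : s.piecewise (r • h) x =
      s.piecewise (fun i => r • s.piecewise h x i) (s.piecewise h x) := by
    ext i
    by_cases hi : i ∈ s <;> simp [hi]
  rw [hpiecewise, f.map_piecewise_smul, Finset.prod_const]

variable [Fintype ι]

section FirstOrderExpansion

variable [DecidableEq ι]

lemma sq_dvd_multilinearMap_add_smul_sub {M : ι → Type*} [∀ i, AddCommGroup (M i)]
    [∀ i, Module R (M i)] (f : MultilinearMap R M R) (r : R) (x h : ∀ i, M i) :
    r ^ 2 ∣ f (x + r • h) - (f x + r * f.linearDeriv x h) := by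
  rw [f.map_add_eq_map_add_linearDeriv_add, map_smul, smul_eq_mul, add_sub_cancel_left]
  refine Finset.dvd_sum fun s hs => ?_
  rw [multilinearMap_piecewise_smul, smul_eq_mul]
  exact (pow_dvd_pow r (Finset.mem_filter.1 hs).2).mul_right _

lemma sum_det_updateRow_eq_trace_adjugate_mul (A E : Matrix ι ι R) :
    ∑ i, (A.updateRow i (E i)).det = (A.adjugate * E).trace := by
  simp_rw [← cramer_transpose_apply, cramer_eq_adjugate_mulVec, ← adjugate_transpose,
    trace_mul_comm A.adjugate, trace, diag_apply, mul_apply, mulVec, dotProduct, transpose_apply,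
    mul_comm]

lemma sq_dvd_det_add_smul_sub (r : R) (A E : Matrix ι ι R) :
    r ^ 2 ∣ (A + r • E).det - (A.det + r * (A.adjugate * E).trace) := by
  have hderiv : detRowAlternating.toMultilinearMap.linearDeriv A E = (A.adjugate * E).trace :=
    (MultilinearMap.linearDeriv_apply _ _ _).trans (sum_det_updateRow_eq_trace_adjugate_mul A E)
  rw [← hderiv]
  exact sq_dvd_multilinearMap_add_smul_sub detRowAlternating.toMultilinearMap r A E

end FirstOrderExpansion

lemma two_dvd_sum_sum_of_symm {f : ι → ι → R} (hsymm : ∀ i j, f i j = f j i)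
    (hdiag : ∀ i, 2 ∣ f i i) : 2 ∣ ∑ i, ∑ j, f i j := by
  simp_rw [← Ideal.Quotient.eq_zero_iff_dvd] at hdiag ⊢
  rw [← Fintype.sum_prod_type', map_sum]
  refine Finset.sum_involution (fun p _ => p.swap) (fun p _ => ?_) (fun p _ hp hswap => hp ?_)
    (fun _ _ => Finset.mem_univ _) (fun p _ => p.swap_swap)
  · rw [← map_add, Prod.fst_swap, Prod.snd_swap, hsymm p.2, ← two_mul,
      Ideal.Quotient.eq_zero_iff_dvd]
    exact dvd_mul_right _ _
  · have hp_diag : p.2 = p.1 := congrArg Prod.fst hswap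
    rw [hp_diag, hdiag]

lemma two_dvd_trace_mul_of_isSymm {A B : Matrix ι ι R} (hA : A.IsSymm) (hB : B.IsSymm)
    (hdiag : ∀ i, 2 ∣ B i i) : 2 ∣ (A * B).trace := by
  simp only [trace, diag_apply, mul_apply]
  refine two_dvd_sum_sum_of_symm (fun i j => ?_) fun i => (hdiag i).mul_left _
  rw [hA.apply, hB.apply]

variable [DecidableEq ι]

lemma two_mul_dvd_det_sub_det_of_isSymm {r : R} (hr : 2 ∣ r) {A B : Matrix ι ι R}
    (hA : A.IsSymm) (hB : B.IsSymm) (hoff : ∀ i j, i ≠ j → r ∣ B i j - A i j)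
    (hdiag : ∀ i, 2 * r ∣ B i i - A i i) : 2 * r ∣ B.det - A.det := by
  obtain ⟨E, hE, hE_diag, hBA⟩ := exists_isSymm_eq_smul (hB.sub hA) hoff hdiag
  have htrace : 2 * r ∣ r * (A.adjugate * E).trace := by
    rw [mul_comm 2]
    exact mul_dvd_mul_left r (two_dvd_trace_mul_of_isSymm hA.adjugate hE hE_diag)
  have hremainder : 2 * r ∣ B.det - (A.det + r * (A.adjugate * E).trace) := by
    rw [← add_sub_cancel A B, hBA]
    exact (mul_dvd_mul_right hr r).trans (sq r ▸ sq_dvd_det_add_smul_sub r A E)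
  simpa [sub_add_eq_sub_sub] using hremainder.add htrace

lemma det_one_sub_vecMulVec (u v : ι → R) : (1 - vecMulVec u v).det = 1 - v ⬝ᵥ u := by
  rw [sub_eq_add_neg, ← neg_vecMulVec, vecMulVec_eq Unit,
    det_one_add_replicateCol_mul_replicateRow, dotProduct_neg, sub_eq_add_neg]

theorem seidel_matrix_det_mod_four_general {S : Matrix ι ι R} (hsymm : S.IsSymm)
    (hdiag : ∀ i, 4 ∣ S i i) (hoff : ∀ i j, i ≠ j → Odd (S i j)) :
    4 ∣ S.det - (1 - (Fintype.card ι : R)) := by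
  have hdet : (1 - vecMulVec 1 1 : Matrix ι ι R).det = 1 - Fintype.card ι := by
    rw [det_one_sub_vecMulVec, one_dotProduct_one]
  have htwo : (2 * 2 : R) = 4 := by norm_num
  rw [← hdet, ← htwo]
  refine two_mul_dvd_det_sub_det_of_isSymm dvd_rfl ?_ hsymm (fun i j hij => ?_) fun i => ?_
  · exact isSymm_one.sub (transpose_vecMulVec 1 1)
  · simpa [vecMulVec_apply, one_apply_ne hij] using (hoff i j hij).add_one.two_dvd
  · simpa [vecMulVec_apply, htwo] using hdiag i

end

/-- The determinant of an integer Seidel matrix of order `n` (symmetric, zero diagonal,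
off-diagonal entries `±1`) is congruent to `1 - n` modulo `4`. -/
theorem seidel_matrix_det_mod_four
    (n : ℕ) (S : Matrix (Fin n) (Fin n) ℤ)
    (hsymm : S.IsSymm)
    (hdiag : ∀ i, S i i = 0)
    (hoff : ∀ i j, i ≠ j → S i j = 1 ∨ S i j = -1) :
    S.det ≡ 1 - (n : ℤ) [ZMOD 4] := by
  have hodd : ∀ i j, i ≠ j → Odd (S i j) := fun i j hij => by
    rcases hoff i j hij with h | h <;> simp [h]
  simpa using (Int.modEq_iff_dvd.2
    (seidel_matrix_det_mod_four_general hsymm (by simp [hdiag]) hodd)).symm
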